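/- Let F = (f_1,…,f_d) be a relative prime vector and let s_j, s_k ⊆ {1,…,d} be lexicographically smallest index sets with ∏_{i∈s_j} f_i = p_j and ∏_{i∈s_k} f_i = p_k. Then for all nonnegative integers t_j, t_k: t_j ≡ t_k (mod gcd(p_j, p_k)) if and only if r_i(t_j) = r_i(t_k) for every i ∈ s_j ∩ s_k, where r_i denotes the i-th component of the residue vector with respect to F. -/

import Mathlib

/-!
Call an index set `s` closed if `i ∈ s`, `i' < i` and `F i' = F i` force `i' ∈ s`.

Two closed sets `s`, `t` satisfy `gcd (∏ s) (∏ t) = ∏ (s ∩ t)`: by closedness no value of `F` is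
attained on both `s \ t` and `t \ s`, so the products over these differences are coprime
(`gcd_prod_of_closed`). Since `s ∩ t` is closed too, it remains to see that congruence modulo
the product over a closed set `s` means agreement of the residues indexed by `s`
(`modEq_prod_iff_of_closed`). This is an induction that removes the largest index `m` of `s`:
with `f = F m`, the remaining product is `f ^ h * Q` where `h` is the number of earlier entries
equal to `f` and `Q` is coprime to `f`, so passing from modulus `f ^ h * Q` to `f ^ (h + 1) * Q`
adds exactly the condition that the base-`f` digits number `h` agree (`modEq_mul_iff_digit`).
-/

lemma modEq_mul_iff_digit (n f a b : ℕ) :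
    a ≡ b [MOD n * f] ↔ a ≡ b [MOD n] ∧ a / n % f = b / n % f := by
  constructor
  · intro h
    refine ⟨h.of_mul_right f, ?_⟩
    rw [← Nat.mod_mul_right_div_self, ← Nat.mod_mul_right_div_self, h]
  · rintro ⟨h, h'⟩
    unfold Nat.ModEq at *
    rw [Nat.mod_mul, Nat.mod_mul, h, h']

lemma gcd_prod_of_closed {d : ℕ} {F : Fin d → ℕ}
    (hrp : ∀ i j, F i = F j ∨ Nat.Coprime (F i) (F j)) {s t : Finset (Fin d)}
    (hs : ∀ i ∈ s, ∀ i' : Fin d, i' < i → F i' = F i → i' ∈ s)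
    (ht : ∀ i ∈ t, ∀ i' : Fin d, i' < i → F i' = F i → i' ∈ t) :
    Nat.gcd (∏ i ∈ s, F i) (∏ i ∈ t, F i) = ∏ i ∈ s ∩ t, F i := by
  have hcop : Nat.Coprime (∏ i ∈ s \ t, F i) (∏ i ∈ t \ s, F i) := by
    refine Nat.Coprime.prod_left fun i hi => Nat.Coprime.prod_right fun j hj => ?_
    rw [Finset.mem_sdiff] at hi hj
    refine (hrp i j).resolve_left fun h => ?_
    rcases lt_trichotomy i j with hlt | rfl | hlt
    · exact hi.2 (ht j hj.1 i hlt h)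
    · exact hi.2 hj.1
    · exact hj.2 (hs i hi.1 j hlt h.symm)
  rw [← Finset.prod_inter_mul_prod_sdiff s t F, ← Finset.prod_inter_mul_prod_sdiff t s F,
    Finset.inter_comm t s, Nat.gcd_mul_left, hcop, mul_one]

lemma modEq_prod_iff_of_closed {d : ℕ} {F : Fin d → ℕ}
    (hrp : ∀ i j, F i = F j ∨ Nat.Coprime (F i) (F j)) (a b : ℕ) (s : Finset (Fin d))
    (hs : ∀ i ∈ s, ∀ i' : Fin d, i' < i → F i' = F i → i' ∈ s) :
    a ≡ b [MOD ∏ i ∈ s, F i] ↔ ∀ i ∈ s,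
      a / (F i) ^ ((Finset.univ.filter (fun j : Fin d => j < i ∧ F j = F i)).card) % F i
        = b / (F i) ^ ((Finset.univ.filter (fun j : Fin d => j < i ∧ F j = F i)).card) % F i := by
  induction s using Finset.induction_on_max with
  | empty => simp [Nat.modEq_one]
  | insert m s hm ih =>
    have hms : m ∉ s := fun h => lt_irrefl _ (hm m h)
    have hs' : ∀ i ∈ s, ∀ i' : Fin d, i' < i → F i' = F i → i' ∈ s := by
      intro i hi i' hlt h
      rcases Finset.mem_insert.1 (hs i (Finset.mem_insert_of_mem hi) i' hlt h) with rfl | h'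
      · exact absurd hlt (hm i hi).asymm
      · exact h'
    -- Closedness puts every earlier entry equal to `F m` into `s`.
    have hfilter : s.filter (fun j => F j = F m)
        = Finset.univ.filter (fun j : Fin d => j < m ∧ F j = F m) := by
      ext j
      simp only [Finset.mem_filter, Finset.mem_univ, true_and]
      refine ⟨fun h => ⟨hm j h.1, h.2⟩, fun h => ⟨?_, h.2⟩⟩
      exact (Finset.mem_insert.1 (hs m (Finset.mem_insert_self _ _) j h.1 h.2)).resolve_left
        h.1.ne
    rw [Finset.forall_mem_insert, ← ih hs', Finset.prod_insert hms,
      ← Finset.prod_filter_mul_prod_filter_not s (fun j => F j = F m) F]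
    have hpow : ∏ j ∈ s.filter (fun j => F j = F m), F j
        = F m ^ (Finset.univ.filter (fun j : Fin d => j < m ∧ F j = F m)).card := by
      rw [← hfilter]
      exact Finset.prod_eq_pow_card fun j hj => (Finset.mem_filter.1 hj).2
    have hcop : Nat.Coprime (F m) (∏ j ∈ s.filter (fun j => ¬ F j = F m), F j) :=
      Nat.Coprime.prod_right fun j hj =>
        (hrp m j).resolve_left fun h => (Finset.mem_filter.1 hj).2 h.symm
    rw [hpow]
    generalize (Finset.univ.filter (fun j : Fin d => j < m ∧ F j = F m)).card = h
    generalize (∏ j ∈ s.filter (fun j => ¬ F j = F m), F j) = Q at hcop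
    have e : F m * (F m ^ h * Q) = F m ^ h * F m * Q := by ring
    rw [e, ← Nat.modEq_and_modEq_iff_modEq_mul ((hcop.pow_left h).mul_left hcop),
      ← Nat.modEq_and_modEq_iff_modEq_mul (hcop.pow_left h), modEq_mul_iff_digit]
    tauto


/-- Let `F` be a relative prime vector and `s_j, s_k` lexicographically smallest index
sets with products `p_j` and `p_k`.  Then for all nonnegative `t_j, t_k`:
`t_j ≡ t_k (mod gcd(p_j, p_k))` iff the residue vectors of `t_j` and `t_k` with respect
to `F` agree on every component `i ∈ s_j ∩ s_k`. -/
theorem stmt_5 (d : ℕ) (F : Fin d → ℕ)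
    (hpos : ∀ i, 0 < F i)
    (hmono : Monotone F)
    (hrp : ∀ i j, F i = F j ∨ Nat.Coprime (F i) (F j))
    (sj sk : Finset (Fin d)) (pj pk : ℕ)
    (hlexj : ∀ i ∈ sj, ∀ i' : Fin d, i' < i → F i' = F i → i' ∈ sj)
    (hlexk : ∀ i ∈ sk, ∀ i' : Fin d, i' < i → F i' = F i → i' ∈ sk)
    (hpj : ∏ i ∈ sj, F i = pj)
    (hpk : ∏ i ∈ sk, F i = pk)
    (tj tk : ℕ) :
    tj ≡ tk [MOD Nat.gcd pj pk]
      ↔ ∀ i ∈ sj ∩ sk,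
          tj / (F i) ^ ((Finset.univ.filter (fun j : Fin d => j < i ∧ F j = F i)).card) % F i
            = tk / (F i) ^ ((Finset.univ.filter (fun j : Fin d => j < i ∧ F j = F i)).card) % F i := by
  rw [← hpj, ← hpk, gcd_prod_of_closed hrp hlexj hlexk]
  refine modEq_prod_iff_of_closed hrp tj tk (sj ∩ sk) fun i hi i' hlt h => ?_
  rw [Finset.mem_inter] at hi ⊢
  exact ⟨hlexj i hi.1 i' hlt h, hlexk i hi.2 i' hlt h⟩
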